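/- arXiv:2401.11716 — 4 statements merged into one kernel-verified Lean document; each statement's English description precedes it below -/
import Mathlib

section
/- Let L be a field and R a Noetherian integrally closed (normal) domain whose field of fractions K is a subfield of L. Let M be a finite-dimensional L-vector space, T : M → M an L-linear endomorphism, and e : M → (ℕ → L) an injective L-linear map. Define M₀ := {m ∈ M | e(m)(n) ∈ R for all n ∈ ℕ}. Assume (i) M₀ spans M as an L-vector space, and (ii) T(M₀) ⊆ M₀. Then every eigenvalue λ ∈ L of T is integral over R (with respect to the inclusion R ⊆ K ⊆ L). -/
/-!
The set `M₀` of vectors with `R`-valued coordinates is a finitely generated `R`-module: since `M` is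
finite-dimensional and `e` is injective, finitely many of the coordinates `e · n` already separate
the points of `M` (`exists_coords_separate`), so `M₀` embeds in a finite power of `R`, which is
Noetherian. By Cayley–Hamilton, `T` restricted to `M₀` is annihilated by a monic polynomial `p` over
`R`. As `M₀` spans `M`, also `p(T) = 0` on `M`, and applying `p(T)` to an eigenvector gives
`p(lam) = 0`.
-/

open Polynomial

/-- The kernels of the truncations of `e` to the first `N` coordinates decrease to `⊥`, hence reach
it, because `M` is Artinian. -/
lemma exists_coords_separate {L M : Type*} [Field L] [AddCommGroup M] [Module L M]
    [FiniteDimensional L M] (e : M →ₗ[L] (ℕ → L)) (he : Function.Injective e) :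
    ∃ N : ℕ, ∀ m : M, (∀ i < N, e m i = 0) → m = 0 := by
  let F : ℕ →o (Submodule L M)ᵒᵈ :=
    { toFun := fun N => OrderDual.toDual
        (⨅ i : Fin N, LinearMap.ker ((LinearMap.proj (i : ℕ)) ∘ₗ e))
      monotone' := by
        intro a b hab
        change (⨅ i : Fin b, LinearMap.ker ((LinearMap.proj (i : ℕ)) ∘ₗ e)) ≤
          ⨅ i : Fin a, LinearMap.ker ((LinearMap.proj (i : ℕ)) ∘ₗ e)
        exact le_iInf fun i => iInf_le_of_le (Fin.castLE hab i) le_rfl }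
  have hF : ∀ (N : ℕ) (m : M), m ∈ OrderDual.ofDual (F N) ↔ ∀ i < N, e m i = 0 := by
    intro N m
    change m ∈ (⨅ i : Fin N, LinearMap.ker ((LinearMap.proj (i : ℕ)) ∘ₗ e)) ↔ _
    simp [Submodule.mem_iInf, Fin.forall_iff]
  obtain ⟨N, hN⟩ := IsArtinian.monotone_stabilizes F
  refine ⟨N, fun m hm => he ?_⟩
  rw [map_zero]
  funext n
  have h1 : m ∈ OrderDual.ofDual (F (max N (n + 1))) := by
    rw [← hN _ (le_max_left _ _)]
    exact (hF N m).2 hm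
  exact (hF _ m).1 h1 n (by omega)

/-- Let `L` be a field and `R` a Noetherian integrally closed domain whose fraction field
`K` is a subfield of `L`. Let `M` be a finite-dimensional `L`-vector space, `T` an
`L`-linear endomorphism of `M`, and `e : M → (ℕ → L)` an injective `L`-linear map. Define
`M₀ = {m | e m n ∈ R for all n}`. If `M₀` spans `M` over `L` and `T(M₀) ⊆ M₀`, then every
eigenvalue `λ ∈ L` of `T` is integral over `R`. -/
theorem stmt_0
    {R : Type*} [CommRing R] [IsDomain R] [IsNoetherianRing R] [IsIntegrallyClosed R]
    {K : Type*} [Field K] [Algebra R K] [IsFractionRing R K]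
    {L : Type*} [Field L] [Algebra K L] [Algebra R L] [IsScalarTower R K L]
    {M : Type*} [AddCommGroup M] [Module L M] [FiniteDimensional L M]
    (T : M →ₗ[L] M) (e : M →ₗ[L] (ℕ → L)) (he : Function.Injective e)
    (hspan : Submodule.span L {m : M | ∀ n : ℕ, e m n ∈ (algebraMap R L).range} = ⊤)
    (hT : ∀ m : M, (∀ n : ℕ, e m n ∈ (algebraMap R L).range) →
      ∀ n : ℕ, e (T m) n ∈ (algebraMap R L).range)
    (lam : L) (hlam : ∃ m : M, m ≠ 0 ∧ T m = lam • m) :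
    IsIntegral R lam := by
  obtain ⟨m, hm0, hm⟩ := hlam
  let _ : Module R M := Module.compHom M (algebraMap R L)
  have : IsScalarTower R L M := IsScalarTower.of_algebraMap_smul fun _ _ => rfl
  let M₀ : Submodule R M :=
    { carrier := {m : M | ∀ n : ℕ, e m n ∈ (algebraMap R L).range}
      add_mem' := fun {a b} ha hb n => by
        rw [map_add]
        exact add_mem (ha n) (hb n)
      zero_mem' := fun n => by
        rw [map_zero]
        exact zero_mem _
      smul_mem' := fun c x hx n => by
        rw [← algebraMap_smul L c x, map_smul]
        exact mul_mem ⟨c, rfl⟩ (hx n) }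
  obtain ⟨N, hN⟩ := exists_coords_separate e he
  -- The embedding of `M₀` in a finite power of (the image of) `R`.
  let φ : M₀ →ₗ[R] (Fin N → LinearMap.range (Algebra.linearMap R L)) :=
    LinearMap.pi fun i => LinearMap.codRestrict _
      (((LinearMap.proj (i : ℕ) ∘ₗ e).restrictScalars R) ∘ₗ M₀.subtype) fun x => x.2 i
  have hφ : Function.Injective φ := by
    rw [injective_iff_map_eq_zero]
    intro x hx
    refine Subtype.ext (hN x fun i hi => ?_)
    exact congrArg Subtype.val (congrFun hx ⟨i, hi⟩)
  have : IsNoetherian R M₀ := isNoetherian_of_injective φ hφ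
  let T₀ : Module.End R M₀ := (T.restrictScalars R).restrict (p := M₀) (q := M₀) hT
  obtain ⟨p, hp, hpT⟩ := LinearMap.exists_monic_and_aeval_eq_zero R T₀
  have hcompat : ∀ (q : R[X]) (x : M₀),
      aeval T (q.map (algebraMap R L)) (x : M) = (aeval T₀ q x : M₀) := by
    intro q
    induction q using Polynomial.induction_on' with
    | add a b ha hb =>
      intro x
      rw [Polynomial.map_add, map_add, map_add, LinearMap.add_apply, LinearMap.add_apply, ha x, hb x,
        Submodule.coe_add]
    | monomial n a =>
      intro x
      have hpow : ∀ k : ℕ, (T ^ k) (x : M) = ((T₀ ^ k) x : M₀) := by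
        intro k
        induction k with
        | zero => rfl
        | succ k ih =>
          rw [pow_succ', pow_succ', Module.End.mul_apply, Module.End.mul_apply, ih]
          rfl
      simp [aeval_monomial, hpow, Module.algebraMap_end_apply]
  have hzero : aeval T (p.map (algebraMap R L)) = 0 := by
    refine LinearMap.ext_on hspan fun x hx => ?_
    have := hcompat p ⟨x, hx⟩
    rw [hpT] at this
    simpa using this
  refine ⟨p, hp, ?_⟩
  have hev := Module.End.aeval_apply_of_hasEigenvector (f := T) (p := p.map (algebraMap R L))
    (μ := lam) (x := m) ⟨Module.End.mem_eigenspace_iff.2 hm, hm0⟩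
  rw [hzero, LinearMap.zero_apply, eval_map] at hev
  exact (smul_eq_zero.1 hev.symm).resolve_right hm0
end

section
/- Let L be a field and R a Noetherian integrally closed (normal) domain whose field of fractions K is a subfield of L. Let M be a finite-dimensional L-vector space and e : M → (ℕ → L) an injective L-linear map. Then the R-module M₀ := {m ∈ M | e(m)(n) ∈ R for all n ∈ ℕ} is finitely generated over R. -/
/-!
Since `M` is Artinian over `L`, the intersection of the kernels of the coordinate functionals
`m ↦ e m n` (zero, as `e` is injective) is already the intersection of finitely many of them, say
those with `n ∈ T` (`Finset.exists_inf_le`). Hence `M₀` embeds `R`-linearly into `T → L`, with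
image inside the image of `T → R`, a Noetherian `R`-module.
-/

/-- Let `L` be a field and `R` a Noetherian integrally closed domain whose fraction field
`K` is a subfield of `L`. Let `M` be a finite-dimensional `L`-vector space and
`e : M → (ℕ → L)` an injective `L`-linear map. Then the `R`-module
`M₀ = {m | e m n ∈ R for all n}` is finitely generated over `R`: there is a finite set
`s ⊆ M₀` whose `R`-span contains `M₀`. -/
theorem stmt_2
    {R : Type*} [CommRing R] [IsDomain R] [IsNoetherianRing R] [IsIntegrallyClosed R]
    {K : Type*} [Field K] [Algebra R K] [IsFractionRing R K]
    {L : Type*} [Field L] [Algebra K L] [Algebra R L] [IsScalarTower R K L]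
    {M : Type*} [AddCommGroup M] [Module L M] [FiniteDimensional L M]
    [Module R M] [IsScalarTower R L M]
    (e : M →ₗ[L] (ℕ → L)) (he : Function.Injective e) :
    ∃ s : Finset M,
      (↑s : Set M) ⊆ {m : M | ∀ n : ℕ, e m n ∈ (algebraMap R L).range} ∧
      {m : M | ∀ n : ℕ, e m n ∈ (algebraMap R L).range} ⊆
        ↑(Submodule.span R (↑s : Set M)) := by
  classical
  obtain ⟨T, hT⟩ := Finset.exists_inf_le
    (fun n : ℕ => LinearMap.ker ((LinearMap.proj n : (ℕ → L) →ₗ[L] L) ∘ₗ e))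
  let g : M →ₗ[R] (T → L) :=
    (LinearMap.funLeft L L (fun t : T => (t : ℕ)) ∘ₗ e).restrictScalars R
  have hg : Function.Injective g := by
    rw [← LinearMap.ker_eq_bot, LinearMap.ker_eq_bot']
    intro m hm
    apply he
    rw [map_zero]
    funext n
    refine hT n (Submodule.mem_finsetInf.2 fun t ht => ?_)
    exact congrFun hm ⟨t, ht⟩
  let M₀ : Submodule R M :=
    (Submodule.pi Set.univ fun _ : ℕ => LinearMap.range (Algebra.linearMap R L)).comap
      (e.restrictScalars R)
  have hM₀ : ∀ m, m ∈ M₀ ↔ ∀ n, e m n ∈ (algebraMap R L).range := by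
    intro m
    simp [M₀, Submodule.mem_pi]
  have hle : M₀.map g ≤ LinearMap.range ((Algebra.linearMap R L).compLeft T) := by
    rintro _ ⟨m, hm, rfl⟩
    choose r hr using (hM₀ m).1 hm
    exact ⟨fun t => r t, funext fun t => hr t⟩
  have hfg : M₀.FG := by
    have : IsNoetherian R (M₀.map g) := isNoetherian_of_le hle
    exact Submodule.fg_of_fg_map_injective g hg (Module.Finite.iff_fg.1 inferInstance)
  obtain ⟨s, hs⟩ := hfg
  refine ⟨s, fun m hm => (hM₀ m).1 (hs ▸ Submodule.subset_span hm), fun m hm => ?_⟩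
  rw [hs]
  exact (hM₀ m).2 hm
end

section
/- Let n ≥ 1 and let k_1 ≥ k_2 ≥ ⋯ ≥ k_n ≥ 0 be integers. Let a, b be integers with a ≥ 0, b ≥ 0 and a + b ≤ n. Then b(a+b+1) + 2·(∑_{l=1}^{n} k_l) − n(n+1) − (∑_{l=n−a−b+1}^{n−b} k_l + 2·∑_{l=n−b+1}^{n} k_l) + δ·n(n − k_n + 1) ≥ 0, where δ = 1 if k_n ≤ n and δ = 0 otherwise. Equivalently, b(a+b+1) + ∑_{l=1}^{n−a−b} k_l + ∑_{l=1}^{n−b} k_l − n(n+1) + δ·n(n − k_n + 1) ≥ 0. -/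
/-!
Bounding every `k l` below by `m = k n`, the two sums of the second form are at least
`(2n - a - 2b) m`, so both forms reduce to an inequality in `n, a, b, m`. Write `n = a + b + c`.
For `m ≤ n` the bound is affine in `m` and it suffices to check the endpoints: it equals
`b (a + b + 1)` at `m = 0` and `b + a c + c ^ 2` at `m = n`. For `m ≥ n + 1` the bound is
nondecreasing in `m` and equals `c (a + c + 1)` at `m = n + 1`.
The two displayed forms agree after splitting `[1, n]` at `n - a - b` and `n - b`.
-/

lemma sum_Icc_one_split (k : ℕ → ℤ) {p q : ℕ} (h : p ≤ q) :
    ∑ l ∈ Finset.Icc 1 q, k l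
      = ∑ l ∈ Finset.Icc 1 p, k l + ∑ l ∈ Finset.Icc (p + 1) q, k l := by
  induction q, h using Nat.le_induction with
  | base => simp
  | succ q hq ih =>
    rw [Finset.sum_Icc_succ_top (by omega), Finset.sum_Icc_succ_top (by omega), ih, add_assoc]

lemma mul_last_le_sum (n : ℕ) (k : ℕ → ℤ)
    (hanti : ∀ i j : ℕ, 1 ≤ i → i ≤ j → j ≤ n → k j ≤ k i) (p : ℕ) (hp : p ≤ n) :
    (p : ℤ) * k n ≤ ∑ l ∈ Finset.Icc 1 p, k l := by
  have h := Finset.card_nsmul_le_sum (Finset.Icc 1 p) k (k n) (fun l hl => by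
    rw [Finset.mem_Icc] at hl
    exact hanti l n hl.1 (hl.2.trans hp) le_rfl)
  simpa using h

/-- The inequality for a constant weight `m`, with `n = a + b + c`. -/
lemma constant_weight_bound (a b c m : ℤ) (ha : 0 ≤ a) (hb : 0 ≤ b) (hc : 0 ≤ c) (hm : 0 ≤ m) :
    0 ≤ b * (a + b + 1) + c * m + (a + c) * m - (a + b + c) * (a + b + c + 1)
        + (if m ≤ a + b + c then (1 : ℤ) else 0) * ((a + b + c) * (a + b + c - m + 1)) := by
  have hac := mul_nonneg ha hc
  have hab := mul_nonneg ha hb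
  split_ifs with h
  · -- The expression simplifies to `b (a + b + 1) + (c - b) m`.
    rcases le_total b c with hbc | hbc
    · nlinarith [mul_nonneg (sub_nonneg.2 hbc) hm, mul_nonneg hb hb]
    · nlinarith [mul_nonneg (sub_nonneg.2 hbc) (sub_nonneg.2 h), mul_nonneg hc hc]
  · have h' : 0 ≤ m - (a + b + c + 1) := by omega
    nlinarith [mul_nonneg hc h', mul_nonneg ha h', mul_nonneg hc hc]

/-- The key arithmetic inequality guaranteeing that the normalized Hecke operators
`p^{δ(k_n ≤ n)·n(n−k_n+1)}·T_{j,n−j}(p²)` preserve the integral structure of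
vector-valued Siegel modular forms of highest weight `(k_1, …, k_n)`:
for integers `k_1 ≥ ⋯ ≥ k_n ≥ 0` and `a, b ≥ 0` with `a + b ≤ n`, with
`δ = 1` if `k_n ≤ n` and `δ = 0` otherwise, one has
`b(a+b+1) + 2·∑_{l=1}^{n} k_l − n(n+1) − (∑_{l=n−a−b+1}^{n−b} k_l + 2·∑_{l=n−b+1}^{n} k_l)
  + δ·n(n−k_n+1) ≥ 0`,
and equivalently
`b(a+b+1) + ∑_{l=1}^{n−a−b} k_l + ∑_{l=1}^{n−b} k_l − n(n+1) + δ·n(n−k_n+1) ≥ 0`. -/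
theorem stmt_10 (n : ℕ) (hn : 1 ≤ n) (k : ℕ → ℤ)
    (hanti : ∀ i j : ℕ, 1 ≤ i → i ≤ j → j ≤ n → k j ≤ k i)
    (hpos : 0 ≤ k n)
    (a b : ℕ) (hab : a + b ≤ n) :
    0 ≤ (b : ℤ) * ((a : ℤ) + (b : ℤ) + 1)
        + 2 * (∑ l ∈ Finset.Icc 1 n, k l) - (n : ℤ) * ((n : ℤ) + 1)
        - ((∑ l ∈ Finset.Icc (n - a - b + 1) (n - b), k l)
            + 2 * ∑ l ∈ Finset.Icc (n - b + 1) n, k l)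
        + (if k n ≤ (n : ℤ) then (1 : ℤ) else 0) * ((n : ℤ) * ((n : ℤ) - k n + 1)) ∧
    0 ≤ (b : ℤ) * ((a : ℤ) + (b : ℤ) + 1)
        + (∑ l ∈ Finset.Icc 1 (n - a - b), k l)
        + (∑ l ∈ Finset.Icc 1 (n - b), k l) - (n : ℤ) * ((n : ℤ) + 1)
        + (if k n ≤ (n : ℤ) then (1 : ℤ) else 0) * ((n : ℤ) * ((n : ℤ) - k n + 1)) := by
  have h2 : 0 ≤ (b : ℤ) * ((a : ℤ) + (b : ℤ) + 1)
        + (∑ l ∈ Finset.Icc 1 (n - a - b), k l)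
        + (∑ l ∈ Finset.Icc 1 (n - b), k l) - (n : ℤ) * ((n : ℤ) + 1)
        + (if k n ≤ (n : ℤ) then (1 : ℤ) else 0) * ((n : ℤ) * ((n : ℤ) - k n + 1)) := by
    have s1 := mul_last_le_sum n k hanti (n - a - b) (by omega)
    have s2 := mul_last_le_sum n k hanti (n - b) (by omega)
    have key := constant_weight_bound a b (n - a - b : ℕ) (k n) (by omega) (by omega)
      (by omega) hpos
    have e1 : (a : ℤ) + b + (n - a - b : ℕ) = n := by omega
    have e2 : (a : ℤ) + (n - a - b : ℕ) = (n - b : ℕ) := by omega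
    rw [e1, e2] at key
    linarith
  refine ⟨?_, h2⟩
  have t1 := sum_Icc_one_split k (show n - a - b ≤ n - b by omega)
  have t2 := sum_Icc_one_split k (show n - b ≤ n by omega)
  linarith
end

section
/- Let n ≥ 1 and let k_1 ≥ k_2 ≥ ⋯ ≥ k_n ≥ 0 be integers, and let j be an integer with 0 ≤ j ≤ n. Then j(n+1) + 2·(∑_{l=1}^{n} k_l) − n(n+1) − (∑_{l=1}^{n−j} k_l + 2·∑_{l=n−j+1}^{n} k_l) + δ·n(n − k_n + 1) ≥ 0, where δ = 1 if k_n ≤ n and δ = 0 otherwise. Equivalently, j(n+1) + ∑_{l=1}^{n−j} k_l − n(n+1) + δ·n(n − k_n + 1) ≥ 0. -/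
/-!
Both expressions agree after splitting `∑_{l ≤ n} k_l` at `n - j`. Since each `k_l ≥ k_n`, the
remaining sum is at least `(n - j) k_n`, so the second expression is at least
`(n - j)(k_n - n - 1) + δ n (n + 1 - k_n)`. This equals `j (n + 1 - k_n) ≥ 0` when `k_n ≤ n`,
and `(n - j)(k_n - n - 1) ≥ 0` when `k_n ≥ n + 1`.
-/

/-- The arithmetic inequality used in the level `N ≥ 2` case of the proof that the
normalized Hecke operators `T_{j,n−j}(p²)` preserve the integral structure of
vector-valued Siegel modular forms of highest weight `(k_1, …, k_n)`:
for integers `k_1 ≥ ⋯ ≥ k_n ≥ 0` and `0 ≤ j ≤ n`, with `δ = 1` if `k_n ≤ n`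
and `δ = 0` otherwise, one has
`j(n+1) + 2·∑_{l=1}^{n} k_l − n(n+1) − (∑_{l=1}^{n−j} k_l + 2·∑_{l=n−j+1}^{n} k_l)
  + δ·n(n−k_n+1) ≥ 0`,
and equivalently `j(n+1) + ∑_{l=1}^{n−j} k_l − n(n+1) + δ·n(n−k_n+1) ≥ 0`. -/
theorem stmt_11 (n : ℕ) (hn : 1 ≤ n) (k : ℕ → ℤ)
    (hanti : ∀ i j : ℕ, 1 ≤ i → i ≤ j → j ≤ n → k j ≤ k i)
    (hpos : 0 ≤ k n)
    (j : ℕ) (hj : j ≤ n) :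
    0 ≤ (j : ℤ) * ((n : ℤ) + 1)
        + 2 * (∑ l ∈ Finset.Icc 1 n, k l) - (n : ℤ) * ((n : ℤ) + 1)
        - ((∑ l ∈ Finset.Icc 1 (n - j), k l)
            + 2 * ∑ l ∈ Finset.Icc (n - j + 1) n, k l)
        + (if k n ≤ (n : ℤ) then (1 : ℤ) else 0) * ((n : ℤ) * ((n : ℤ) - k n + 1)) ∧
    0 ≤ (j : ℤ) * ((n : ℤ) + 1)
        + (∑ l ∈ Finset.Icc 1 (n - j), k l) - (n : ℤ) * ((n : ℤ) + 1)
        + (if k n ≤ (n : ℤ) then (1 : ℤ) else 0) * ((n : ℤ) * ((n : ℤ) - k n + 1)) := by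
  -- The full sum splits at `n - j`, which makes the two expressions equal.
  have hsplit : ∑ l ∈ Finset.Icc 1 n, k l
      = (∑ l ∈ Finset.Icc 1 (n - j), k l) + ∑ l ∈ Finset.Icc (n - j + 1) n, k l := by
    rw [← Finset.sum_union]
    · congr 1
      ext x
      simp only [Finset.mem_union, Finset.mem_Icc]
      omega
    · rw [Finset.disjoint_left]
      intro x
      simp only [Finset.mem_Icc]
      omega
  have hsum : ((n : ℤ) - j) * k n ≤ ∑ l ∈ Finset.Icc 1 (n - j), k l := by
    have h := Finset.card_nsmul_le_sum (Finset.Icc 1 (n - j)) k (k n) (fun l hl => by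
      rw [Finset.mem_Icc] at hl
      exact hanti l n hl.1 (by omega) le_rfl)
    rw [Nat.card_Icc, Nat.add_sub_cancel, nsmul_eq_mul, Nat.cast_sub hj] at h
    exact h
  have key : 0 ≤ (j : ℤ) * ((n : ℤ) + 1)
      + (∑ l ∈ Finset.Icc 1 (n - j), k l) - (n : ℤ) * ((n : ℤ) + 1)
      + (if k n ≤ (n : ℤ) then (1 : ℤ) else 0) * ((n : ℤ) * ((n : ℤ) - k n + 1)) := by
    have hj' : (j : ℤ) ≤ n := by exact_mod_cast hj
    split_ifs with h
    · have := mul_nonneg (Int.natCast_nonneg j) (show 0 ≤ (n : ℤ) - k n + 1 by linarith)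
      linarith
    · have := mul_nonneg (sub_nonneg.2 hj') (show 0 ≤ k n - n - 1 by omega)
      linarith
  refine ⟨?_, key⟩
  rw [hsplit]
  linarith
end
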